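/- arXiv:math/0606615 — 4 statements merged into one kernel-verified Lean document; each statement's English description precedes it below -/
import Mathlib

section
/- Let m ≥ 1, let μ be a finite Borel measure on ℝ, and let f : ℝ^m → ℝ be bounded and Borel measurable. Define F_{m,f}(ν) = ⟨f, ν^m⟩ for finite Borel measures ν on ℝ. Then for every x ∈ ℝ the limit lim_{r→0+} (1/r)[F_{m,f}(μ + r δ_x) − F_{m,f}(μ)] exists and equals Σ_{i=1}^m ⟨Ψ_i(x)f, μ^{m−1}⟩. -/
open MeasureTheory Filter Topology

lemma aux_int {k : ℕ} (ν : Measure (Fin k → ℝ)) [IsFiniteMeasure ν]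
    (f : (Fin k → ℝ) → ℝ) (hfm : Measurable f) (C : ℝ) (hfb : ∀ z, |f z| ≤ C) :
    Integrable f ν :=
  Integrable.of_bound hfm.aestronglyMeasurable C (Eventually.of_forall hfb)

lemma aux_meas_cons {n : ℕ} : Measurable
    (fun p : ℝ × (Fin n → ℝ) => (Fin.cons p.1 p.2 : Fin (n + 1) → ℝ)) := by
  refine measurable_pi_lambda _ fun i => ?_
  refine Fin.cases ?_ (fun j => ?_) i
  · simpa using measurable_fst
  · simp only [Fin.cons_succ]
    exact (measurable_pi_apply j).comp measurable_snd

lemma aux_fubini (n : ℕ) (ν : Measure ℝ) [IsFiniteMeasure ν]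
    (f : (Fin (n + 1) → ℝ) → ℝ) (hfm : Measurable f) (C : ℝ) (hfb : ∀ z, |f z| ≤ C) :
    ∫ z, f z ∂(Measure.pi fun _ : Fin (n + 1) => ν) =
      ∫ z, ∫ y, f (Fin.cons y z) ∂ν ∂(Measure.pi fun _ : Fin n => ν) := by
  have h := (measurePreserving_piFinSuccAbove (fun _ : Fin (n + 1) => ν) 0).symm
  rw [← h.integral_comp']
  have e : ∀ p : ℝ × (Fin n → ℝ),
      (MeasurableEquiv.piFinSuccAbove (fun _ : Fin (n + 1) => ℝ) 0).symm p
        = (Fin.cons p.1 p.2 : Fin (n + 1) → ℝ) := by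
    intro p
    simp [MeasurableEquiv.piFinSuccAbove_symm_apply, Fin.insertNthEquiv]
  simp_rw [e]
  refine integral_prod_symm (fun p : ℝ × (Fin n → ℝ) => f (Fin.cons p.1 p.2)) ?_
  exact Integrable.of_bound (hfm.comp aux_meas_cons).aestronglyMeasurable C
    (Eventually.of_forall fun p => hfb _)

lemma aux_g_meas (n : ℕ) (μ : Measure ℝ) [IsFiniteMeasure μ]
    (f : (Fin (n + 1) → ℝ) → ℝ) (hfm : Measurable f) :
    Measurable (fun z : Fin n → ℝ => ∫ y, f (Fin.cons y z) ∂μ) := by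
  have : StronglyMeasurable (fun p : (Fin n → ℝ) × ℝ => f (Fin.cons p.2 p.1)) :=
    (hfm.comp (aux_meas_cons.comp measurable_swap)).stronglyMeasurable
  exact this.integral_prod_right'.measurable

lemma aux_g_bound (n : ℕ) (μ : Measure ℝ) [IsFiniteMeasure μ]
    (f : (Fin (n + 1) → ℝ) → ℝ) (C : ℝ) (hfb : ∀ z, |f z| ≤ C) (z : Fin n → ℝ) :
    |∫ y, f (Fin.cons y z) ∂μ| ≤ C * μ.real Set.univ :=
  norm_integral_le_of_norm_le_const (f := fun y => f (Fin.cons y z))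
    (Eventually.of_forall fun y => hfb _)

lemma aux_cons_meas (n : ℕ) (x : ℝ) :
    Measurable (fun z : Fin n → ℝ => (Fin.cons x z : Fin (n + 1) → ℝ)) :=
  aux_meas_cons.comp measurable_prodMk_left

lemma aux_step (n : ℕ) (μ : Measure ℝ) [IsFiniteMeasure μ]
    (f : (Fin (n + 1) → ℝ) → ℝ) (hfm : Measurable f) (C : ℝ) (hfb : ∀ z, |f z| ≤ C) (x : ℝ)
    (r : ℝ) (hr : 0 ≤ r) :
    ∫ z, f z ∂(Measure.pi fun _ : Fin (n + 1) => μ + ENNReal.ofReal r • Measure.dirac x) =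
      (∫ z, ∫ y, f (Fin.cons y z) ∂μ
        ∂(Measure.pi fun _ : Fin n => μ + ENNReal.ofReal r • Measure.dirac x)) +
      r * ∫ z, f (Fin.cons x z)
        ∂(Measure.pi fun _ : Fin n => μ + ENNReal.ofReal r • Measure.dirac x) := by
  have hfin : IsFiniteMeasure (ENNReal.ofReal r • Measure.dirac x : Measure ℝ) :=
    Measure.smul_finite _ ENNReal.ofReal_ne_top
  rw [aux_fubini n _ f hfm C hfb, ← integral_const_mul, ← integral_add]
  · congr 1
    ext z
    have hm : Measurable (fun y => f (Fin.cons y z)) :=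
      hfm.comp (aux_meas_cons.comp measurable_prodMk_right)
    have hi : ∀ ρ : Measure ℝ, IsFiniteMeasure ρ → Integrable (fun y => f (Fin.cons y z)) ρ :=
      fun ρ _ => Integrable.of_bound hm.aestronglyMeasurable C (Eventually.of_forall fun y => hfb _)
    rw [integral_add_measure (hi _ inferInstance) (hi _ hfin), integral_smul_measure,
      integral_dirac, ENNReal.toReal_ofReal hr, smul_eq_mul]
  · exact aux_int _ _ (aux_g_meas n μ f hfm) _ (aux_g_bound n μ f C hfb)
  · exact (aux_int _ _ (hfm.comp (aux_cons_meas n x)) C fun z => hfb _).const_mul r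

lemma aux_zero (ν : Measure ℝ) (g : (Fin 0 → ℝ) → ℝ) :
    ∫ z, g z ∂(Measure.pi fun _ : Fin 0 => ν) = g default := by
  rw [Measure.pi_of_empty (fun _ : Fin 0 => ν) default, integral_dirac]

theorem statement0 (n : ℕ) (μ : Measure ℝ) [IsFiniteMeasure μ]
    (f : (Fin (n + 1) → ℝ) → ℝ) (hfm : Measurable f) (C : ℝ)
    (hfb : ∀ z, |f z| ≤ C) (x : ℝ) :
    Tendsto
      (fun r : ℝ => (1 / r) *
        ((∫ z, f z ∂(Measure.pi fun _ : Fin (n + 1) => μ + ENNReal.ofReal r • Measure.dirac x)) -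
          ∫ z, f z ∂(Measure.pi fun _ : Fin (n + 1) => μ)))
      (𝓝[>] (0 : ℝ))
      (𝓝 (∑ i : Fin (n + 1), ∫ z, f (i.insertNth x z) ∂(Measure.pi fun _ : Fin n => μ))) := by
  induction n generalizing C with
  | zero =>
    refine tendsto_const_nhds.congr' ?_
    filter_upwards [self_mem_nhdsWithin] with r hr
    have hr : 0 < r := hr
    rw [aux_step 0 μ f hfm C hfb x r hr.le, aux_fubini 0 μ f hfm C hfb]
    rw [Fin.sum_univ_succ]
    simp only [aux_zero, Fin.insertNth_zero', Finset.univ_eq_empty, Finset.sum_empty, add_zero]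
    field_simp
    ring
  | succ n ih =>
    have h1 := ih _ (aux_g_meas (n + 1) μ f hfm) _ (aux_g_bound (n + 1) μ f C hfb)
    have h2 := ih (fun z => f (Fin.cons x z)) (hfm.comp (aux_cons_meas (n + 1) x)) C
      (fun z => hfb _)
    have hid : Tendsto (fun r : ℝ => r) (𝓝[>] (0 : ℝ)) (𝓝 0) :=
      tendsto_id.mono_left nhdsWithin_le_nhds
    have h3 := (hid.mul h2).add_const
      (∫ z, f (Fin.cons x z) ∂(Measure.pi fun _ : Fin (n + 1) => μ))
    have h4 := h1.add h3
    have hlim : (∑ i : Fin (n + 1 + 1),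
          ∫ z, f (i.insertNth x z) ∂(Measure.pi fun _ : Fin (n + 1) => μ)) =
        (∑ i : Fin (n + 1), ∫ z, ∫ y, f (Fin.cons y (i.insertNth x z : Fin (n + 1) → ℝ)) ∂μ
          ∂(Measure.pi fun _ : Fin n => μ)) +
        (0 * (∑ i : Fin (n + 1), ∫ z, f (Fin.cons x (i.insertNth x z : Fin (n + 1) → ℝ))
          ∂(Measure.pi fun _ : Fin n => μ)) +
          ∫ z, f (Fin.cons x z) ∂(Measure.pi fun _ : Fin (n + 1) => μ)) := by
      rw [Fin.sum_univ_succ, zero_mul, zero_add, add_comm]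
      congr 1
      · refine Finset.sum_congr rfl fun i _ => ?_
        have hm : Measurable (fun z : Fin (n + 1) → ℝ =>
            (i.succ.insertNth x z : Fin (n + 1 + 1) → ℝ)) := by
          refine measurable_pi_lambda _ fun j => ?_
          refine Fin.succAboveCases i.succ ?_ (fun k => ?_) j
          · simp
          · simpa using measurable_pi_apply k
        rw [aux_fubini n μ (fun z => f (i.succ.insertNth x z)) (hfm.comp hm) C (fun z => hfb _)]
        congr 1
        ext z
        congr 1
        ext y
        congr 1
        ext j
        refine Fin.cases ?_ (fun k => ?_) j
        · have := Fin.insertNth_apply_succAbove (α := fun _ => ℝ) i.succ x (Fin.cons y z) 0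
          simpa using this
        · refine Fin.succAboveCases i ?_ (fun l => ?_) k
          · simp
          · have := Fin.insertNth_apply_succAbove (α := fun _ => ℝ) i.succ x (Fin.cons y z) l.succ
            simpa using this
      · simp
    rw [hlim]
    refine h4.congr' ?_
    filter_upwards [self_mem_nhdsWithin] with r hr
    have hr : 0 < r := hr
    rw [aux_step (n + 1) μ f hfm C hfb x r hr.le, aux_fubini (n + 1) μ f hfm C hfb]
    field_simp
    ring
end

section
/- Let m ≥ 2, let μ be a finite Borel measure on ℝ, and let f : ℝ^m → ℝ be bounded and Borel measurable. Define F_{m,f}(ν) = ⟨f, ν^m⟩ for finite Borel measures ν on ℝ. For each y ∈ ℝ let D_y(ν) := Σ_{j=1}^m ⟨Ψ_j(y)f, ν^{m−1}⟩ (the first variational derivative of F_{m,f} at ν in direction y). Then for all x, y ∈ ℝ the limit lim_{r→0+} (1/r)[D_y(μ + r δ_x) − D_y(μ)] exists and equals Σ_{1≤i,j≤m, i≠j} ⟨Ψ_{i,j}(x,y)f, μ^{m−2}⟩, where Ψ_{i,j}(x,y)f : ℝ^{m−2} → ℝ is obtained from f by placing x in the i-th variable of f, y in the j-th variable of f, and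 the m−2 remaining arguments, in increasing order of position, as the free variables. -/
open MeasureTheory Filter Topology

/-- The position of index `j` among the indices of `Fin (n+2)` after removing index `i`
(meaningful when `i ≠ j`): one has `i.succAbove (auxIdx i j) = j`. -/
def auxIdx {n : ℕ} (i j : Fin (n + 2)) : Fin (n + 1) :=
  if _h : (j : ℕ) < (i : ℕ) then ⟨(j : ℕ), by have := i.isLt; omega⟩
  else ⟨(j : ℕ) - 1, by have := j.isLt; omega⟩

/-- `Ψ_{i,j}(x,y) f : ℝ^n → ℝ` (for `f : ℝ^{n+2} → ℝ`, `i ≠ j`): place `x` in the `i`-th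
variable of `f`, `y` in the `j`-th variable of `f`, and the `n` remaining arguments, in
increasing order of position, as the free variables. -/
def Psi2 {n : ℕ} (i j : Fin (n + 2)) (x y : ℝ) (f : (Fin (n + 2) → ℝ) → ℝ)
    (z : Fin n → ℝ) : ℝ :=
  f (i.insertNth x ((auxIdx i j).insertNth y z))

lemma aux_fub {k : ℕ} (ν : Measure ℝ) [IsFiniteMeasure ν] (i : Fin (k+1))
    (g : (Fin (k+1) → ℝ) → ℝ) (hg : Measurable g) (C : ℝ) (hb : ∀ z, |g z| ≤ C) :
    ∫ z, g z ∂(Measure.pi fun _ : Fin (k+1) => ν) =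
      ∫ z, (∫ a, g (i.insertNth a z) ∂ν) ∂(Measure.pi fun _ : Fin k => ν) := by
  have hp := measurePreserving_piFinSuccAbove (fun _ : Fin (k+1) => ν) i
  have h1 := hp.symm.integral_comp' (g := g)
  rw [← h1, integral_prod_symm]
  · rfl
  · refine Integrable.of_bound (C := C) ?_ ?_
    · exact (hg.comp (MeasurableEquiv.measurable _)).aestronglyMeasurable
    · exact Eventually.of_forall fun z => hb _

lemma aux_meas {k : ℕ} (i : Fin (k+1)) :
    Measurable (fun p : (Fin k → ℝ) × ℝ => (i.insertNth p.2 p.1 : Fin (k+1) → ℝ)) :=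
  (MeasurableEquiv.piFinSuccAbove (fun _ : Fin (k+1) => ℝ) i).symm.measurable.comp measurable_swap

lemma aux_meas' {k : ℕ} (i : Fin (k+1)) (x : ℝ) :
    Measurable (fun p : (Fin k → ℝ) => (i.insertNth x p : Fin (k+1) → ℝ)) :=
  (aux_meas i).comp (measurable_id.prodMk measurable_const)

/-- the derivative -/
noncomputable def auxD (μ : Measure ℝ) (x : ℝ) : (k : ℕ) → ((Fin k → ℝ) → ℝ) → ℝ
  | 0, _ => 0
  | k+1, g => ∑ i : Fin (k+1), ∫ z, g (i.insertNth x z) ∂(Measure.pi fun _ : Fin k => μ)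

instance aux_fin (μ : Measure ℝ) [IsFiniteMeasure μ] (x r : ℝ) :
    IsFiniteMeasure (μ + ENNReal.ofReal r • Measure.dirac x) := by
  have : IsFiniteMeasure (ENNReal.ofReal r • Measure.dirac x) :=
    Measure.smul_finite _ ENNReal.ofReal_ne_top
  infer_instance

lemma aux_bdd (μ : Measure ℝ) [IsFiniteMeasure μ] (C : ℝ) (h : ℝ → ℝ) (hb : ∀ z, |h z| ≤ C) :
    |∫ a, h a ∂μ| ≤ C * μ.real Set.univ := by
  rw [← Real.norm_eq_abs]
  exact norm_integral_le_of_norm_le_const (Eventually.of_forall hb)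

lemma aux_comm {n : ℕ} (a b : ℝ) (i j : Fin (n+1)) (h : i ≤ j) (p : Fin n → ℝ) :
    (i.castSucc.insertNth a (j.insertNth b p : Fin (n+1) → ℝ) : Fin (n+2) → ℝ) =
      j.succ.insertNth b (i.insertNth a p : Fin (n+1) → ℝ) := by
  have e1 : j.succ.succAbove i = i.castSucc :=
    Fin.succAbove_of_castSucc_lt _ _ (by simpa [Fin.lt_def, Nat.lt_succ_iff] using h)
  have e2 : i.castSucc.succAbove j = j.succ :=
    Fin.succAbove_of_le_castSucc _ _ (by simpa using h)
  have e3 : ∀ l : Fin n, i.castSucc.succAbove (j.succAbove l) = j.succ.succAbove (i.succAbove l) := by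
    intro l
    have h' : (i:ℕ) ≤ j := h
    ext
    simp only [Fin.succAbove, Fin.lt_def]
    split_ifs <;> simp_all <;> omega
  rw [Fin.insertNth_eq_iff]
  refine ⟨?_, ?_⟩
  · rw [← e1, Fin.insertNth_apply_succAbove, Fin.insertNth_apply_same]
  · rw [Fin.insertNth_eq_iff]
    refine ⟨?_, ?_⟩
    · simp only [Fin.removeNth, e2, Fin.insertNth_apply_same]
    · funext l
      simp only [Fin.removeNth, e3, Fin.insertNth_apply_succAbove]

lemma aux_deriv (μ : Measure ℝ) [IsFiniteMeasure μ] (x : ℝ) (k : ℕ) :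
    ∀ (g : (Fin k → ℝ) → ℝ) (_ : Measurable g) (C : ℝ) (_ : ∀ z, |g z| ≤ C),
    HasDerivWithinAt (fun r : ℝ => ∫ z, g z
      ∂(Measure.pi fun _ : Fin k => μ + ENNReal.ofReal r • Measure.dirac x))
      (auxD μ x k g) (Set.Ici 0) 0 := by
  induction k with
  | zero =>
    intro g hg C hb
    have : (fun r : ℝ => ∫ z, g z
      ∂(Measure.pi fun _ : Fin 0 => μ + ENNReal.ofReal r • Measure.dirac x)) =
        fun _ => g default := by
      funext r
      rw [Measure.pi_of_empty _ default, integral_dirac]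
    rw [this]
    exact hasDerivWithinAt_const _ _ _
  | succ k ih =>
    intro g hg C hb
    let g1 : (Fin k → ℝ) → ℝ := fun z => ∫ a, g ((0 : Fin (k+1)).insertNth a z) ∂μ
    let g2 : (Fin k → ℝ) → ℝ := fun z => g ((0 : Fin (k+1)).insertNth x z)
    have hg1 : Measurable g1 :=
      (StronglyMeasurable.integral_prod_right
        (f := fun z a => g ((0 : Fin (k+1)).insertNth a z)) (hg.comp (aux_meas 0)).stronglyMeasurable).measurable
    have hb1 : ∀ z, |g1 z| ≤ C * μ.real Set.univ := fun z => aux_bdd μ C _ fun _ => hb _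
    have hg2 : Measurable g2 := hg.comp (aux_meas' 0 x)
    have hb2 : ∀ z, |g2 z| ≤ C := fun z => hb _
    have h1 := ih g1 hg1 _ hb1
    have h2 := (hasDerivWithinAt_id (0:ℝ) (Set.Ici 0)).mul (ih g2 hg2 _ hb2)
    have h3 := h1.add h2
    have key : ∀ r ∈ Set.Ici (0:ℝ), ∫ z, g z
      ∂(Measure.pi fun _ : Fin (k+1) => μ + ENNReal.ofReal r • Measure.dirac x) =
      (∫ z, g1 z ∂(Measure.pi fun _ : Fin k => μ + ENNReal.ofReal r • Measure.dirac x)) +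
      r * (∫ z, g2 z ∂(Measure.pi fun _ : Fin k => μ + ENNReal.ofReal r • Measure.dirac x)) := by
      intro r hr
      rw [aux_fub _ 0 g hg C hb, ← integral_const_mul, ← integral_add]
      · congr 1
        funext z
        have hm : Measurable fun a => g ((0 : Fin (k+1)).insertNth a z) :=
          (hg.comp (aux_meas 0)).comp (measurable_const.prodMk measurable_id)
        rw [integral_add_measure, integral_smul_measure, integral_dirac,
          ENNReal.toReal_ofReal hr]
        · rfl
        · exact Integrable.of_bound (C := C) hm.aestronglyMeasurable
            (Eventually.of_forall fun z => hb _)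
        · refine Integrable.smul_measure ?_ ENNReal.ofReal_ne_top
          exact Integrable.of_bound (C := C) hm.aestronglyMeasurable
            (Eventually.of_forall fun z => hb _)
      · exact Integrable.of_bound hg1.aestronglyMeasurable _ (Eventually.of_forall hb1)
      · exact (Integrable.of_bound hg2.aestronglyMeasurable _ (Eventually.of_forall hb2)).const_mul r
    have h4 := h3.congr (f₁ := fun r : ℝ => ∫ z, g z
      ∂(Measure.pi fun _ : Fin (k+1) => μ + ENNReal.ofReal r • Measure.dirac x)) key
        (key 0 Set.self_mem_Ici)
    refine h4.congr_deriv ?_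
    symm
    simp only [id]
    rw [zero_mul, add_zero, one_mul]
    simp only [ENNReal.ofReal_zero, zero_smul, add_zero]
    rw [auxD, Fin.sum_univ_succ, add_comm]
    congr 1
    cases k with
    | zero => simp [auxD]
    | succ k =>
      rw [auxD]
      refine Finset.sum_congr rfl fun i _ => ?_
      refine (aux_fub μ 0 _ (hg.comp (aux_meas' i.succ x)) C (fun _ => hb _)).trans ?_
      congr 1
      funext z
      simp only [g1]
      congr 1
      funext a
      have := aux_comm a x (0 : Fin (k+1)) i (Fin.zero_le _) z
      simp only [Function.comp]
      rw [← this]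
      rfl

lemma aux_insert {n : ℕ} (j : Fin (n+2)) (k : Fin (n+1)) (x y : ℝ) (z : Fin n → ℝ) :
    (j.insertNth y (k.insertNth x z : Fin (n+1) → ℝ) : Fin (n+2) → ℝ) =
      (j.succAbove k).insertNth x ((auxIdx (j.succAbove k) j).insertNth y z : Fin (n+1) → ℝ) := by
  rcases lt_or_ge k.castSucc j with h | h
  · rw [Fin.succAbove_of_castSucc_lt _ _ h]
    obtain ⟨j', rfl⟩ := Fin.exists_succ_eq.2 (Fin.ne_zero_of_lt h)
    have e : auxIdx k.castSucc j'.succ = j' := by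
      have : (k:ℕ) < j' + 1 := h
      unfold auxIdx
      rw [dif_neg (by simp; omega)]
      ext; simp
    rw [e, ← aux_comm x y k j' (by simpa using h) z]
  · rw [Fin.succAbove_of_le_castSucc _ _ h]
    obtain ⟨j', rfl⟩ := Fin.exists_castSucc_eq.2 (ne_of_lt (lt_of_le_of_lt h (Fin.castSucc_lt_last k)))
    have h' : (j':ℕ) ≤ k := h
    have e : auxIdx k.succ j'.castSucc = j' := by
      unfold auxIdx
      rw [dif_pos (by simp; omega)]
      ext; simp
    rw [e, ← aux_comm y x j' k h' z]

/-- For `m = n+2 ≥ 2`, a finite Borel measure `μ` on `ℝ` and a bounded Borel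
`f : ℝ^m → ℝ`, the first variational derivative `D_y(ν) = ∑_j ⟨Ψ_j(y) f, ν^{m-1}⟩` of
`F_{m,f}` admits, at `μ` in direction `x`, the variational derivative
`∑_{i ≠ j} ⟨Ψ_{i,j}(x,y) f, μ^{m-2}⟩`. -/
theorem statement1 (n : ℕ) (μ : Measure ℝ) [IsFiniteMeasure μ]
    (f : (Fin (n + 2) → ℝ) → ℝ) (hfm : Measurable f) (C : ℝ)
    (hfb : ∀ z, |f z| ≤ C) (x y : ℝ) :
    Tendsto
      (fun r : ℝ => (1 / r) *
        ((∑ j : Fin (n + 2), ∫ z, f (j.insertNth y z)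
            ∂(Measure.pi fun _ : Fin (n + 1) => μ + ENNReal.ofReal r • Measure.dirac x)) -
         ∑ j : Fin (n + 2), ∫ z, f (j.insertNth y z)
            ∂(Measure.pi fun _ : Fin (n + 1) => μ)))
      (𝓝[>] (0 : ℝ))
      (𝓝 (∑ i : Fin (n + 2), ∑ j : Fin (n + 2),
        if i ≠ j then ∫ z, Psi2 i j x y f z ∂(Measure.pi fun _ : Fin n => μ) else 0)) := by
  have H : HasDerivWithinAt (fun r : ℝ => ∑ j : Fin (n + 2), ∫ z, f (j.insertNth y z)
            ∂(Measure.pi fun _ : Fin (n + 1) => μ + ENNReal.ofReal r • Measure.dirac x))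
      (∑ j : Fin (n + 2), auxD μ x (n+1) (fun z => f (j.insertNth y z))) (Set.Ici 0) 0 :=
    HasDerivWithinAt.fun_sum fun j _ =>
      aux_deriv μ x (n+1) _ (hfm.comp (aux_meas' j y)) C fun _ => hfb _
  have H2 := hasDerivWithinAt_iff_tendsto_slope.1 H
  rw [Set.Ici_sdiff_left] at H2
  have E : (∑ i : Fin (n + 2), ∑ j : Fin (n + 2),
        if i ≠ j then ∫ z, Psi2 i j x y f z ∂(Measure.pi fun _ : Fin n => μ) else 0) =
      ∑ j : Fin (n + 2), auxD μ x (n+1) (fun z => f (j.insertNth y z)) := by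
    rw [Finset.sum_comm]
    refine Finset.sum_congr rfl fun j _ => ?_
    rw [Fin.sum_univ_succAbove _ j, auxD]
    simp only [ne_eq, not_true_eq_false, if_false, zero_add, Fin.succAbove_ne, not_false_eq_true,
      if_true]
    refine Finset.sum_congr rfl fun k _ => ?_
    unfold Psi2
    congr 1
    funext z
    rw [← aux_insert]
  rw [E]
  refine H2.congr fun r => ?_
  simp [slope_def_field, div_eq_inv_mul]
end

section
/- Let m, n ≥ 1, θ > 0, let c : ℝ → ℝ and ρ : ℝ → ℝ be functions, set a(x) := c(x)² + ρ(0), and let f : ℝⁿ → ℝ be twice continuously differentiable. Define H : ℝ^m → ℝ by H(x₁,…,x_m) = θ^{−n} Σ_{l₁,…,l_n=1}^m f(x_{l₁},…,x_{l_n}). Then for all (x₁,…,x_m) ∈ ℝ^m: (1/2)Σ_{i=1}^m a(x_i) ∂²H/∂x_i² + (1/2)Σ_{1≤i,j≤m, i≠j} ρ(x_i−x_j) ∂²H/∂x_i∂x_j = (1/(2θⁿ)) Σ_{α=1}^n Σ_{l₁,…,l_n=1}^m a(x_{l_α}) f''_{αα}(x_{l₁},…,x_{l_n}) + (1/(2θⁿ))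 Σ_{1≤α,β≤n, α≠β} Σ_{l₁,…,l_n=1, l_α=l_β}^m c(x_{l_α}) c(x_{l_β}) f''_{αβ}(x_{l₁},…,x_{l_n}) + (1/(2θⁿ)) Σ_{1≤α,β≤n, α≠β} Σ_{l₁,…,l_n=1}^m ρ(x_{l_α}−x_{l_β}) f''_{αβ}(x_{l₁},…,x_{l_n}). -/
open MeasureTheory Filter Topology

/-- The pullback `H = F_{n,f} ∘ ζ` of `F_{n,f}(ν) = ⟨f, νⁿ⟩` under the empirical-measure
map `ζ(x₁,…,x_m) = θ⁻¹ ∑_i δ_{x_i}`: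
`H(x₁,…,x_m) = θ^{-n} ∑_{l₁,…,l_n=1}^m f(x_{l₁},…,x_{l_n})`. -/
noncomputable def empPull (θ : ℝ) {n m : ℕ} (f : (Fin n → ℝ) → ℝ)
    (x : Fin m → ℝ) : ℝ :=
  (1 / θ) ^ n * ∑ l : Fin n → Fin m, f (x ∘ l)

/-- The second partial derivative of `f : ℝ^m → ℝ` with respect to its `i`-th and `j`-th
variables. -/
noncomputable def pd2 {m : ℕ} (f : (Fin m → ℝ) → ℝ) (i j : Fin m) (x : Fin m → ℝ) : ℝ :=
  fderiv ℝ (fun w => fderiv ℝ f w (Pi.single j (1 : ℝ))) x (Pi.single i (1 : ℝ))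

lemma aux_fderiv {n m : ℕ} (k : ℝ) (g : (Fin n → Fin m) → (Fin n → ℝ) → ℝ)
    (hg : ∀ l, Differentiable ℝ (g l)) (i : Fin m) (w : Fin m → ℝ) :
    fderiv ℝ (fun w : Fin m → ℝ => k * ∑ l, g l (w ∘ l)) w (Pi.single i (1 : ℝ))
      = k * ∑ l, ∑ α, if l α = i then fderiv ℝ (g l) (w ∘ l) (Pi.single α (1 : ℝ)) else 0 := by
  have h1 : ∀ l : Fin n → Fin m, HasFDerivAt (fun w : Fin m → ℝ => g l (w ∘ l))
      ((fderiv ℝ (g l) (w ∘ l)).comp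
        (ContinuousLinearMap.pi fun a => ContinuousLinearMap.proj (R := ℝ) (φ := fun _ : Fin m => ℝ) (l a))) w := by
    intro l
    have h2 : HasFDerivAt (fun w : Fin m → ℝ => w ∘ l)
      (ContinuousLinearMap.pi fun a => ContinuousLinearMap.proj (R := ℝ) (φ := fun _ : Fin m => ℝ) (l a)) w :=
      (ContinuousLinearMap.pi fun a => ContinuousLinearMap.proj (R := ℝ) (φ := fun _ : Fin m => ℝ) (l a)).hasFDerivAt
    exact ((hg l) (w ∘ l)).hasFDerivAt.comp w h2
  have h3 := (HasFDerivAt.fun_sum (u := Finset.univ) (fun l _ => h1 l)).const_mul k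
  rw [h3.fderiv]
  simp only [ContinuousLinearMap.smul_apply, ContinuousLinearMap.sum_apply,
    ContinuousLinearMap.comp_apply, smul_eq_mul]
  congr 1
  refine Finset.sum_congr rfl fun l _ => ?_
  have h4 : (ContinuousLinearMap.pi fun a => ContinuousLinearMap.proj (R := ℝ) (φ := fun _ : Fin m => ℝ) (l a))
      (Pi.single i (1 : ℝ)) = ∑ α : Fin n, if l α = i then (Pi.single α (1 : ℝ) : Fin n → ℝ) else 0 := by
    ext b
    rw [Finset.sum_apply, Finset.sum_eq_single b]
    · by_cases h : l b = i <;> simp [h]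
    · intro a _ hab
      by_cases h : l a = i <;> simp [h, Ne.symm hab]
    · simp
  rw [h4, map_sum]
  refine Finset.sum_congr rfl fun α _ => ?_
  split_ifs <;> simp

lemma aux_pd2 {n m : ℕ} (θ : ℝ) (f : (Fin n → ℝ) → ℝ) (hf : ContDiff ℝ 2 f)
    (i j : Fin m) (x : Fin m → ℝ) :
    pd2 (empPull θ f) i j x = (1 / θ) ^ n * ∑ l : Fin n → Fin m, ∑ α, ∑ β,
      if l α = i then if l β = j then pd2 f α β (x ∘ l) else 0 else 0 := by
  have hd : ∀ β : Fin n, Differentiable ℝ (fun y => fderiv ℝ f y (Pi.single β (1 : ℝ))) := by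
    intro β
    have := (hf.fderiv_right (m := 1) (by norm_num)).differentiable (by norm_num)
    exact fun y => (this y).clm_apply (differentiableAt_const _)
  have hd' : ∀ (l : Fin n → Fin m) (β : Fin n), Differentiable ℝ
      (fun y => if l β = j then fderiv ℝ f y (Pi.single β (1 : ℝ)) else 0) := by
    intro l β
    by_cases h : l β = j
    · simpa [h] using hd β
    · simp [h]
  unfold pd2
  have e1 : (fun w => fderiv ℝ (empPull θ f) w (Pi.single j (1 : ℝ))) =
      fun w : Fin m → ℝ => (1 / θ) ^ n * ∑ l : Fin n → Fin m,
        (fun y => ∑ β, if l β = j then fderiv ℝ f y (Pi.single β (1 : ℝ)) else 0) (w ∘ l) := by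
    ext w
    exact aux_fderiv ((1 / θ) ^ n) (fun _ => f) (fun _ => hf.differentiable (by norm_num)) j w
  rw [e1, aux_fderiv ((1 / θ) ^ n)
    (fun l y => ∑ β, if l β = j then fderiv ℝ f y (Pi.single β (1 : ℝ)) else 0)
    (fun l => Differentiable.fun_sum fun β _ => hd' l β) i x]
  congr 1
  refine Finset.sum_congr rfl fun l _ => Finset.sum_congr rfl fun α _ => ?_
  by_cases h : l α = i
  · simp only [h, if_true]
    rw [fderiv_fun_sum (fun β _ => hd' l β _), ContinuousLinearMap.sum_apply]
    refine Finset.sum_congr rfl fun β _ => ?_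
    by_cases h' : l β = j <;> simp [h']
  · simp [h]

lemma aux_sum {n m : ℕ} (K : Fin m → Fin m → ℝ) (P : Fin n → Fin n → (Fin n → Fin m) → ℝ) :
    (∑ i, ∑ j, K i j * ∑ l : Fin n → Fin m, ∑ α, ∑ β,
      if l α = i then if l β = j then P α β l else 0 else 0)
    = ∑ α, ∑ β, ∑ l : Fin n → Fin m, K (l α) (l β) * P α β l := by
  have : ∀ l : Fin n → Fin m, ∀ α β, K (l α) (l β) * P α β l = ∑ i, ∑ j, K i j *
      (if l α = i then if l β = j then P α β l else 0 else 0) := by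
    intro l α β
    simp [mul_ite, Finset.sum_ite_eq]
  simp only [this, Finset.mul_sum]
  calc _ = ∑ i, ∑ l : Fin n → Fin m, ∑ j, ∑ α, ∑ β, K i j *
      (if l α = i then if l β = j then P α β l else 0 else 0) :=
        Finset.sum_congr rfl fun i _ => Finset.sum_comm
    _ = ∑ l : Fin n → Fin m, ∑ i, ∑ j, ∑ α, ∑ β, K i j *
      (if l α = i then if l β = j then P α β l else 0 else 0) := Finset.sum_comm
    _ = ∑ l : Fin n → Fin m, ∑ α, ∑ β, ∑ i, ∑ j, K i j *
      (if l α = i then if l β = j then P α β l else 0 else 0) := by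
        refine Finset.sum_congr rfl fun l _ => ?_
        calc _ = ∑ i, ∑ α, ∑ j, ∑ β, K i j *
              (if l α = i then if l β = j then P α β l else 0 else 0) :=
              Finset.sum_congr rfl fun i _ => Finset.sum_comm
          _ = ∑ α, ∑ i, ∑ j, ∑ β, K i j *
              (if l α = i then if l β = j then P α β l else 0 else 0) := Finset.sum_comm
          _ = _ := by
              refine Finset.sum_congr rfl fun α _ => ?_
              rw [Finset.sum_comm' (t' := Finset.univ) (s' := fun _ => Finset.univ) (by simp)]
              calc _ = ∑ j, ∑ β, ∑ i, K i j *
                    (if l α = i then if l β = j then P α β l else 0 else 0) :=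
                    Finset.sum_congr rfl fun j _ => Finset.sum_comm
                _ = ∑ β, ∑ j, ∑ i, K i j *
                    (if l α = i then if l β = j then P α β l else 0 else 0) := Finset.sum_comm
                _ = _ := Finset.sum_congr rfl fun β _ => Finset.sum_comm
    _ = ∑ α, ∑ l : Fin n → Fin m, ∑ β, ∑ i, ∑ j, K i j *
      (if l α = i then if l β = j then P α β l else 0 else 0) := Finset.sum_comm
    _ = _ := Finset.sum_congr rfl fun i _ => Finset.sum_comm

/-- Lemma 3.2: `G^m (F_{n,f} ∘ ζ)` equals the stated three-term sum, where
`G^m = (1/2)∑_i a(x_i)∂²/∂x_i² + (1/2)∑_{i≠j} ρ(x_i−x_j)∂²/∂x_i∂x_j` and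
`a(x) = c(x)² + ρ(0)`. -/
theorem statement5 (m n : ℕ) (hm : 1 ≤ m) (hn : 1 ≤ n) (θ : ℝ) (hθ : 0 < θ)
    (c ρ : ℝ → ℝ) (f : (Fin n → ℝ) → ℝ) (hf : ContDiff ℝ 2 f) (x : Fin m → ℝ) :
    (1 / 2) * (∑ i : Fin m, (c (x i) ^ 2 + ρ 0) * pd2 (empPull θ f) i i x)
      + (1 / 2) * (∑ i : Fin m, ∑ j : Fin m,
          if i ≠ j then ρ (x i - x j) * pd2 (empPull θ f) i j x else 0)
    = (1 / (2 * θ ^ n)) * (∑ α : Fin n, ∑ l : Fin n → Fin m,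
          (c (x (l α)) ^ 2 + ρ 0) * pd2 f α α (x ∘ l))
      + (1 / (2 * θ ^ n)) * (∑ α : Fin n, ∑ β : Fin n,
          if α ≠ β then
            ∑ l ∈ Finset.univ.filter (fun l : Fin n → Fin m => l α = l β),
              c (x (l α)) * c (x (l β)) * pd2 f α β (x ∘ l)
          else 0)
      + (1 / (2 * θ ^ n)) * (∑ α : Fin n, ∑ β : Fin n,
          if α ≠ β then
            ∑ l : Fin n → Fin m, ρ (x (l α) - x (l β)) * pd2 f α β (x ∘ l)
          else 0) := by
  have hL : (1 / 2) * (∑ i : Fin m, (c (x i) ^ 2 + ρ 0) * pd2 (empPull θ f) i i x)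
      + (1 / 2) * (∑ i : Fin m, ∑ j : Fin m,
          if i ≠ j then ρ (x i - x j) * pd2 (empPull θ f) i j x else 0)
      = (1 / (2 * θ ^ n)) * ∑ i : Fin m, ∑ j : Fin m,
        ((if i = j then c (x i) * c (x j) else 0) + ρ (x i - x j)) *
          ∑ l : Fin n → Fin m, ∑ α, ∑ β,
            if l α = i then if l β = j then pd2 f α β (x ∘ l) else 0 else 0 := by
    have e : ∀ i : Fin m, (c (x i) ^ 2 + ρ 0) * pd2 (empPull θ f) i i x =
        ∑ j, if i = j then (c (x i) ^ 2 + ρ 0) * pd2 (empPull θ f) i j x else 0 := by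
      intro i; simp
    simp only [e]
    rw [← mul_add, ← Finset.sum_add_distrib]
    simp only [← Finset.sum_add_distrib]
    simp only [Finset.mul_sum (s := (Finset.univ : Finset (Fin m)))]
    refine Finset.sum_congr rfl fun i _ => Finset.sum_congr rfl fun j _ => ?_
    rw [aux_pd2 θ f hf]
    have hk : (1 / θ) ^ n = 1 / θ ^ n := by simp
    rw [hk]
    have hk2 : 1 / (2 * θ ^ n) = 1 / 2 * (1 / θ ^ n) := by
      rw [one_div_mul_one_div]
    rw [hk2]
    by_cases h : i = j
    · subst h
      simp only [ne_eq, not_true_eq_false, if_true, if_false, sub_self]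
      ring
    · simp only [ne_eq, h, not_false_eq_true, if_true, if_false]
      ring
  rw [hL, aux_sum (fun i j => (if i = j then c (x i) * c (x j) else 0) + ρ (x i - x j))
    (fun α β l => pd2 f α β (x ∘ l)), ← mul_add, ← mul_add]
  congr 1
  have e : ∀ α : Fin n, ∑ l : Fin n → Fin m, (c (x (l α)) ^ 2 + ρ 0) * pd2 f α α (x ∘ l) =
      ∑ β, if α = β then ∑ l : Fin n → Fin m, (c (x (l α)) ^ 2 + ρ 0) * pd2 f α β (x ∘ l) else 0 := by
    intro α; simp
  simp only [e]
  simp only [← Finset.sum_add_distrib]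
  refine Finset.sum_congr rfl fun α _ => Finset.sum_congr rfl fun β _ => ?_
  by_cases h : α = β
  · subst h
    simp [sq]
  · simp only [ne_eq, h, not_false_eq_true, if_true, if_false, zero_add]
    rw [Finset.sum_filter, ← Finset.sum_add_distrib]
    refine Finset.sum_congr rfl fun l _ => ?_
    split_ifs <;> ring
end

section
/- Let ζ be a Borel measure on ℝ and let b > 0 and l > 0 be constants such that ζ([x, x+l]) ≤ b·l for every x ∈ ℝ. Then for every t > 0 and every x ∈ ℝ, ∫_ℝ (2πt)^{−1/2} exp(−(x−y)²/(2t)) ζ(dy) ≤ b (2l + √(2πt)) / √(2πt). -/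
open MeasureTheory Filter Topology Real

theorem aux_n (ζ : Measure ℝ) (b l : ℝ) (hb : 0 < b) (hl : 0 < l)
    (hζ : ∀ x : ℝ, ζ (Set.Icc x (x + l)) ≤ ENNReal.ofReal (b * l)) (a : ℝ) (n : ℕ) :
    ζ (Set.Icc a (a + (n + 1) * l)) ≤ ENNReal.ofReal ((n + 1) * (b * l)) := by
  induction n with
  | zero => simpa using hζ a
  | succ n ih =>
    have hsub : Set.Icc a (a + ((n + 1 : ℕ) + 1) * l) ⊆
        Set.Icc a (a + (n + 1) * l) ∪ Set.Icc (a + (n + 1) * l) (a + (n + 1) * l + l) := by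
      intro y hy
      push_cast at hy
      rcases le_total y (a + (n + 1) * l) with h | h
      · exact Or.inl ⟨hy.1, h⟩
      · exact Or.inr ⟨h, by linarith [hy.2]⟩
    calc _ ≤ _ := measure_mono hsub
      _ ≤ _ := measure_union_le _ _
      _ ≤ ENNReal.ofReal ((n + 1) * (b * l)) + ENNReal.ofReal (b * l) := add_le_add ih (hζ _)
      _ = _ := by
        rw [← ENNReal.ofReal_add (by positivity) (by positivity)]
        congr 1
        push_cast
        ring

theorem aux_r (ζ : Measure ℝ) (b l : ℝ) (hb : 0 < b) (hl : 0 < l)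
    (hζ : ∀ x : ℝ, ζ (Set.Icc x (x + l)) ≤ ENNReal.ofReal (b * l)) (a r : ℝ) (hr : 0 ≤ r) :
    ζ (Set.Icc a (a + r)) ≤ ENNReal.ofReal (b * (r + l)) := by
  have h1 : r < (⌊r / l⌋₊ + 1) * l := (div_lt_iff₀ hl).1 (Nat.lt_floor_add_one (r / l))
  have h2 : ⌊r / l⌋₊ * l ≤ r := (le_div_iff₀ hl).1 (Nat.floor_le (by positivity))
  refine (measure_mono (Set.Icc_subset_Icc_right ?_)).trans
    ((aux_n ζ b l hb hl hζ a ⌊r / l⌋₊).trans (ENNReal.ofReal_le_ofReal ?_))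
  · linarith
  · nlinarith

theorem aux_lev (ζ : Measure ℝ) (b l : ℝ) (hb : 0 < b) (hl : 0 < l)
    (hζ : ∀ x : ℝ, ζ (Set.Icc x (x + l)) ≤ ENNReal.ofReal (b * l))
    (t : ℝ) (ht : 0 < t) (x s : ℝ) (hs : 0 < s) :
    ζ {y | s ≤ Real.exp (-(x - y) ^ 2 / (2 * t))} ≤
      ENNReal.ofReal b * volume {y | s ≤ Real.exp (-(x - y) ^ 2 / (2 * t))} +
        (Set.Ioc (0:ℝ) 1).indicator (fun _ => ENNReal.ofReal (2 * b * l)) s := by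
  by_cases h1 : s ≤ 1
  · rw [Set.indicator_of_mem (by exact ⟨hs, h1⟩)]
    set r := Real.sqrt (2 * t * (-Real.log s)) with hrdef
    have hlog : Real.log s ≤ 0 := Real.log_nonpos hs.le h1
    have hr : 0 ≤ r := Real.sqrt_nonneg _
    have hE : {y | s ≤ Real.exp (-(x - y) ^ 2 / (2 * t))} = Set.Icc (x - r) (x + r) := by
      ext y
      simp only [Set.mem_ofPred_eq, Set.mem_Icc]
      rw [← Real.log_le_iff_le_exp hs, le_div_iff₀ (by positivity)]
      have : Real.log s * (2 * t) ≤ -(x - y) ^ 2 ↔ (x - y) ^ 2 ≤ 2 * t * (-Real.log s) := by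
        constructor <;> intro h <;> linarith
      rw [this, Real.sq_le (by nlinarith)]
      constructor <;> rintro ⟨h, h'⟩ <;> constructor <;> linarith
    rw [hE, Real.volume_Icc, ← ENNReal.ofReal_mul hb.le,
      ← ENNReal.ofReal_add (by nlinarith) (by positivity)]
    have hsub : Set.Icc (x - r) (x + r) ⊆ Set.Icc (x - r) (x - r + r) ∪ Set.Icc x (x + r) := by
      intro y hy
      rcases le_total y x with h | h
      · exact Or.inl ⟨hy.1, by linarith⟩
      · exact Or.inr ⟨h, hy.2⟩
    calc _ ≤ _ := measure_mono hsub
      _ ≤ _ := measure_union_le _ _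
      _ ≤ ENNReal.ofReal (b * (r + l)) + ENNReal.ofReal (b * (r + l)) :=
        add_le_add (aux_r ζ b l hb hl hζ _ r hr) (aux_r ζ b l hb hl hζ _ r hr)
      _ = _ := by
        rw [← ENNReal.ofReal_add (by positivity) (by positivity)]
        congr 1
        ring
  · have : {y | s ≤ Real.exp (-(x - y) ^ 2 / (2 * t))} = ∅ := by
      ext y
      simp only [Set.mem_ofPred_eq, Set.mem_empty_iff_false, iff_false, not_le]
      refine lt_of_le_of_lt (Real.exp_le_one_iff.2 ?_) (not_le.1 h1)
      exact div_nonpos_of_nonpos_of_nonneg (by nlinarith [sq_nonneg (x - y)]) (by positivity)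
    rw [this]
    simp

theorem aux_gauss (t : ℝ) (ht : 0 < t) (x : ℝ) :
    ∫⁻ y, ENNReal.ofReal (Real.exp (-(x - y) ^ 2 / (2 * t))) =
      ENNReal.ofReal (Real.sqrt (2 * π * t)) := by
  have hfun : (fun y : ℝ => Real.exp (-(x - y) ^ 2 / (2 * t))) =
      fun y => (fun u : ℝ => Real.exp (-(1 / (2 * t)) * u ^ 2)) (x - y) := by
    funext y
    simp only
    congr 1
    ring
  have hi : Integrable (fun y : ℝ => Real.exp (-(x - y) ^ 2 / (2 * t))) := by
    rw [hfun]
    exact (integrable_exp_neg_mul_sq (by positivity)).comp_sub_left x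
  rw [← ofReal_integral_eq_lintegral_ofReal hi (ae_of_all _ fun y => (Real.exp_pos _).le), hfun,
    integral_sub_left_eq_self (fun u : ℝ => Real.exp (-(1 / (2 * t)) * u ^ 2)), integral_gaussian]
  congr 2
  field_simp

/-- Lemma 7.1 for the Gaussian kernel: if a Borel measure `ζ` on `ℝ`
satisfies `ζ([x, x+l]) ≤ b·l` for all `x`, then for every `t > 0` and `x ∈ ℝ`,
`∫ g_t(x,y) ζ(dy) ≤ b(2l + √(2πt))/√(2πt)`, where `g_t` is the Brownian transition
density. -/
theorem statement10 (ζ : Measure ℝ) (b l : ℝ) (hb : 0 < b) (hl : 0 < l)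
    (hζ : ∀ x : ℝ, ζ (Set.Icc x (x + l)) ≤ ENNReal.ofReal (b * l))
    (t : ℝ) (ht : 0 < t) (x : ℝ) :
    (∫⁻ y, ENNReal.ofReal (Real.exp (-(x - y) ^ 2 / (2 * t)) / Real.sqrt (2 * π * t)) ∂ζ)
      ≤ ENNReal.ofReal (b * (2 * l + Real.sqrt (2 * π * t)) / Real.sqrt (2 * π * t)) := by
  have hm : Measurable (fun y : ℝ => Real.exp (-(x - y) ^ 2 / (2 * t))) := by fun_prop
  have key : ∫⁻ y, ENNReal.ofReal (Real.exp (-(x - y) ^ 2 / (2 * t))) ∂ζ ≤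
      ENNReal.ofReal (b * (2 * l + Real.sqrt (2 * π * t))) := by
    rw [lintegral_eq_lintegral_meas_le ζ (ae_of_all _ fun y => (Real.exp_pos _).le) hm.aemeasurable]
    calc _ ≤ ∫⁻ s in Set.Ioi (0:ℝ), (ENNReal.ofReal b *
          volume {y | s ≤ Real.exp (-(x - y) ^ 2 / (2 * t))} +
          (Set.Ioc (0:ℝ) 1).indicator (fun _ => ENNReal.ofReal (2 * b * l)) s) :=
        setLIntegral_mono' measurableSet_Ioi
          fun s hs => aux_lev ζ b l hb hl hζ t ht x s hs
      _ = ENNReal.ofReal b * ENNReal.ofReal (Real.sqrt (2 * π * t)) +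
          ∫⁻ s in Set.Ioi (0:ℝ),
            (Set.Ioc (0:ℝ) 1).indicator (fun _ => ENNReal.ofReal (2 * b * l)) s := by
        rw [lintegral_add_right _ (measurable_const.indicator measurableSet_Ioc),
          lintegral_const_mul' _ _ ENNReal.ofReal_ne_top,
          ← lintegral_eq_lintegral_meas_le volume (ae_of_all _ fun y => (Real.exp_pos _).le)
            hm.aemeasurable, aux_gauss t ht x]
      _ ≤ ENNReal.ofReal b * ENNReal.ofReal (Real.sqrt (2 * π * t)) +
          ENNReal.ofReal (2 * b * l) := by
        gcongr
        refine (setLIntegral_le_lintegral _ _).trans ?_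
        rw [lintegral_indicator measurableSet_Ioc]
        simp
      _ = _ := by
        rw [← ENNReal.ofReal_mul hb.le, ← ENNReal.ofReal_add (by positivity) (by positivity)]
        congr 1
        ring
  have h0 : 0 < Real.sqrt (2 * π * t) := by positivity
  simp_rw [ENNReal.ofReal_div_of_pos h0, ENNReal.div_eq_inv_mul]
  rw [lintegral_const_mul _ hm.ennreal_ofReal]
  gcongr
end
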